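/- Let the real-valued random field Z = {Z(s) : s ∈ Z^N} have identically distributed marginals and exponentially decreasing α-mixing coefficients (α(k) ≤ c0·exp(−c1·k)), with E[Z(s)] = 0 and |Z(s)| ≤ B for all s. Let n ∈ N_+^N satisfy min_i n_i ≥ e² and min_i n_i / max_i n_i ≥ C' for some constant C' > 0. Then there are constants A1, A2 > 0 depending only on the lattice dimension N, on C' and on c0, c1 (but not on n or B) such that for all ε > 0: P( |Σ_{s∈I_n} Z(s)| > ε ) ≤ A1·exp( −A2·ε·B^{−1}·(∏_{i=1}^N n_i)^{−N/(N+1)}·(∏_{i=1}^N log n_i)^{−1} ). -/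

import Mathlib

open MeasureTheory Filter

noncomputable section

/-- `ℓ∞`-distance between two lattice points of `ℤ^N`. -/
def latDist {N : ℕ} (s t : Fin N → ℤ) : ℕ := Finset.univ.sup fun i => (s i - t i).natAbs

/-- The σ-algebra generated by the random variables `Z(s)`, `s ∈ I`. -/
def fieldSigma {N : ℕ} {Ω E : Type*} [MeasurableSpace E]
    (Z : (Fin N → ℤ) → Ω → E) (I : Set (Fin N → ℤ)) : MeasurableSpace Ω :=
  ⨆ s ∈ I, MeasurableSpace.comap (Z s) inferInstance

/-- The spatial α-mixing coefficient. -/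
def alphaMix {N : ℕ} {Ω E : Type*} [MeasurableSpace Ω] [MeasurableSpace E]
    (P : Measure Ω) (Z : (Fin N → ℤ) → Ω → E) (k : ℕ) : ℝ :=
  sSup { x : ℝ | ∃ I J : Set (Fin N → ℤ),
    (∀ s ∈ I, ∀ t ∈ J, k ≤ latDist s t) ∧
    ∃ A B : Set Ω, MeasurableSet[fieldSigma Z I] A ∧ MeasurableSet[fieldSigma Z J] B ∧
      x = |(P (A ∩ B)).toReal - (P A).toReal * (P B).toReal| }

/-- The observation window `I_n = {s ∈ ℤ^N : e_N ≤ s ≤ n}`. -/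
def obsIdx {N : ℕ} (n : Fin N → ℕ) : Finset (Fin N → ℤ) :=
  Finset.Icc (fun _ => 1) (fun i => (n i : ℤ))

/-!
Tile `ℤ^N` by cubes of side `p` and group them into `2 ^ N` classes by the parities of their
positions; distinct cubes of one class are at distance at least `p`. Covariances of the field are
summable, so a cube sum has variance of the order of the volume `p ^ N`, and its moment generating
function at parameters of the order of `1 / (p ^ N * B)` is at most `exp (O(1) / p ^ N)`. Within a
class of `m` cubes the moment generating function of the total is the product of these up to an
error `m * exp (δ * m) * α(p)`. For `p` close to `(∏ i, n i) ^ (1 / (N + 1))` there are only `O(p)`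
cubes, since the sides `n i` are comparable; taking `δ` small against `c1`, the factor
`α(p) ≤ c0 * exp (-c1 * p)` then beats `exp (δ * m)`. So each class has a moment generating
function bounded by a constant, and the exponential Markov inequality applies to each class.
-/

section Covariance

open ProbabilityTheory

variable {Ω : Type*} {m m₁ m₂ mΩ : MeasurableSpace Ω} {P : Measure Ω} [IsProbabilityMeasure P]
  {X Y : Ω → ℝ} {a b c d κ : ℝ}

lemma covariance_eq_integral_mul_sub (hX : MemLp X 2 P) (hY : MemLp Y 2 P) :
    cov[X, Y; P] = ∫ ω, X ω * (Y ω - P[Y]) ∂P := by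
  have hXY : Integrable (fun ω => X ω * Y ω) P := hX.integrable_mul hY
  simp_rw [covariance_eq_sub hX hY, mul_sub, Pi.mul_apply]
  rw [integral_sub hXY ((hX.integrable one_le_two).mul_const _), integral_mul_const]

lemma covariance_indicator_one {A B : Set Ω} (hA : MeasurableSet A) (hB : MeasurableSet B) :
    cov[A.indicator 1, B.indicator 1; P] = P.real (A ∩ B) - P.real A * P.real B := by
  have hmem {S : Set Ω} (hS : MeasurableSet S) : MemLp (S.indicator (1 : Ω → ℝ)) 2 P :=
    (memLp_const 1).indicator hS
  rw [covariance_eq_sub (hmem hA) (hmem hB), ← Set.inter_indicator_one, integral_indicator_one hA,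
    integral_indicator_one hB, integral_indicator_one (hA.inter hB)]

lemma covariance_condExp_right (hm : m ≤ mΩ) (hXm : StronglyMeasurable[m] X) (hX : MemLp X 2 P)
    (hY : MemLp Y 2 P) : cov[X, P[Y | m]; P] = cov[X, Y; P] := by
  have hpull : P[X * Y | m] =ᵐ[P] X * P[Y | m] :=
    condExp_mul_of_stronglyMeasurable_left hXm (hX.integrable_mul hY) (hY.integrable one_le_two)
  rw [covariance_eq_sub hX (hY.condExp one_le_two), covariance_eq_sub hX hY, integral_condExp hm,
    ← integral_congr_ae hpull, integral_condExp hm]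

-- Among the `m`-measurable variables with values in `[a, b]`, the covariance with `Y` is largest
-- for the one equal to `b` where `P[Y | m]` is at least the mean of `Y`, and to `a` elsewhere.
lemma covariance_le_of_covariance_indicator_le (hm : m ≤ mΩ) (hXm : Measurable[m] X)
    (hX : ∀ᵐ ω ∂P, X ω ∈ Set.Icc a b) (hY : MemLp Y 2 P)
    (hκ : ∀ A, MeasurableSet[m] A → cov[A.indicator 1, Y; P] ≤ κ) :
    cov[X, Y; P] ≤ (b - a) * κ := by
  set h := P[Y | m]
  have hh : MemLp h 2 P := hY.condExp one_le_two
  have hX2 : MemLp X 2 P := memLp_of_bounded hX (hXm.mono hm le_rfl).aestronglyMeasurable 2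
  have hXa2 : MemLp (fun ω => X ω - a) 2 P := hX2.sub (memLp_const a)
  set A : Set Ω := {ω | P[h] ≤ h ω}
  have hA : MeasurableSet[m] A := measurableSet_le measurable_const
    stronglyMeasurable_condExp.measurable
  have hA2 : MemLp (A.indicator (1 : Ω → ℝ)) 2 P := (memLp_const 1).indicator (hm _ hA)
  have hh0 : MemLp (fun ω => h ω - P[h]) 2 P := hh.sub (memLp_const _)
  have hab : a ≤ b := by
    obtain ⟨ω, hω⟩ := hX.exists
    exact hω.1.trans hω.2
  calc cov[X, Y; P] = cov[fun ω => X ω - a, h; P] := by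
        rw [covariance_sub_const_left (hX2.integrable one_le_two),
          covariance_condExp_right hm hXm.stronglyMeasurable hX2 hY]
    _ = ∫ ω, (X ω - a) * (h ω - P[h]) ∂P := covariance_eq_integral_mul_sub hXa2 hh
    _ ≤ ∫ ω, (b - a) * (A.indicator 1 ω * (h ω - P[h])) ∂P := by
        refine integral_mono_ae (hXa2.integrable_mul hh0)
          ((hA2.integrable_mul hh0).const_mul (b - a)) ?_
        filter_upwards [hX] with ω ⟨haX, hXb⟩
        by_cases hω : ω ∈ A
        · simp only [Set.indicator_of_mem hω, Pi.one_apply, one_mul]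
          exact mul_le_mul_of_nonneg_right (by linarith) (sub_nonneg.mpr hω)
        · simp only [Set.indicator_of_notMem hω, zero_mul, mul_zero]
          exact mul_nonpos_of_nonneg_of_nonpos (by linarith) (sub_nonpos.mpr (not_le.mp hω).le)
    _ = (b - a) * cov[A.indicator 1, Y; P] := by
        rw [integral_const_mul, ← covariance_eq_integral_mul_sub hA2 hh,
          covariance_condExp_right hm (stronglyMeasurable_one.indicator hA) hA2 hY]
    _ ≤ (b - a) * κ := mul_le_mul_of_nonneg_left (hκ A hA) (sub_nonneg.mpr hab)

lemma covariance_le_of_measureReal_inter_sub_le (hm₁ : m₁ ≤ mΩ) (hm₂ : m₂ ≤ mΩ)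
    (hXm : Measurable[m₁] X) (hYm : Measurable[m₂] Y) (hX : ∀ᵐ ω ∂P, X ω ∈ Set.Icc a b)
    (hY : ∀ᵐ ω ∂P, Y ω ∈ Set.Icc c d)
    (hκ : ∀ A B, MeasurableSet[m₁] A → MeasurableSet[m₂] B →
      P.real (A ∩ B) - P.real A * P.real B ≤ κ) :
    cov[X, Y; P] ≤ (b - a) * ((d - c) * κ) := by
  have hY2 : MemLp Y 2 P := memLp_of_bounded hY (hYm.mono hm₂ le_rfl).aestronglyMeasurable 2
  refine covariance_le_of_covariance_indicator_le hm₁ hXm hX hY2 fun A hA => ?_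
  rw [covariance_comm]
  refine covariance_le_of_covariance_indicator_le hm₂ hYm hY
    ((memLp_const 1).indicator (hm₁ _ hA)) fun B hB => ?_
  rw [covariance_comm, covariance_indicator_one (hm₁ _ hA) (hm₂ _ hB)]
  exact hκ A B hA hB

end Covariance

section Exponential

open ProbabilityTheory

variable {Ω : Type*} {mΩ : MeasurableSpace Ω} {P : Measure Ω} {X : Ω → ℝ} {A b t : ℝ}

lemma mgf_le_exp_sq_mul_variance [IsProbabilityMeasure P] (hXm : AEMeasurable X P)
    (hX : ∀ᵐ ω ∂P, |X ω| ≤ b) (hmean : P[X] = 0) (ht : |t| * b ≤ 1) :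
    mgf X P t ≤ Real.exp (t ^ 2 * Var[X; P]) := by
  have hX2 : MemLp X 2 P :=
    memLp_of_bounded (hX.mono fun _ h => abs_le.mp h) hXm.aestronglyMeasurable 2
  have hXI : Integrable (fun ω => 1 + t * X ω) P :=
    (integrable_const 1).add ((hX2.integrable one_le_two).const_mul t)
  have hsq : Integrable (fun ω => t ^ 2 * X ω ^ 2) P := hX2.integrable_sq.const_mul _
  have hexp : Integrable (fun ω => Real.exp (t * X ω)) P :=
    integrable_exp_mul_of_mem_Icc hXm (hX.mono fun _ h => abs_le.mp h)
  calc mgf X P t ≤ ∫ ω, (1 + t * X ω + t ^ 2 * X ω ^ 2) ∂P := by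
        refine integral_mono_ae hexp (hXI.add hsq) ?_
        filter_upwards [hX] with ω hω
        have htX : |t * X ω| ≤ 1 := by
          rw [abs_mul]
          exact (mul_le_mul_of_nonneg_left hω (abs_nonneg t)).trans ht
        have := (abs_le.mp (Real.abs_exp_sub_one_sub_id_le htX)).2
        linarith [mul_pow t (X ω) 2]
    _ = t ^ 2 * Var[X; P] + 1 := by
        rw [integral_add hXI hsq, integral_add (integrable_const 1)
          ((hX2.integrable one_le_two).const_mul t), integral_const_mul, integral_const_mul, hmean,
          variance_of_integral_eq_zero hXm hmean]
        simp [add_comm]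
    _ ≤ Real.exp (t ^ 2 * Var[X; P]) := Real.add_one_le_exp _

lemma measureReal_lt_abs_le_of_mgf_le [IsFiniteMeasure P] (ht : 0 ≤ t)
    (hint : ∀ u, Integrable (fun ω => Real.exp (u * X ω)) P)
    (hA : mgf X P t ≤ A) (hA' : mgf X P (-t) ≤ A) (x : ℝ) :
    P.real {ω | x < |X ω|} ≤ 2 * A * Real.exp (-(t * x)) := by
  have hupper : P.real {ω | x ≤ X ω} ≤ A * Real.exp (-(t * x)) := by
    refine (measure_ge_le_exp_mul_mgf x ht (hint t)).trans ?_
    rw [neg_mul, mul_comm]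
    gcongr
  have hlower : P.real {ω | X ω ≤ -x} ≤ A * Real.exp (-(t * x)) := by
    refine (measure_le_le_exp_mul_mgf (-x) (neg_nonpos.mpr ht) (hint (-t))).trans ?_
    rw [neg_neg, mul_neg, mul_comm]
    gcongr
  have hsub : {ω | x < |X ω|} ⊆ {ω | x ≤ X ω} ∪ {ω | X ω ≤ -x} := fun ω hω =>
    (lt_abs.mp hω).imp le_of_lt fun h => by simpa using (lt_neg_of_lt_neg h).le
  linarith [(measureReal_mono (μ := P) hsub).trans (measureReal_union_le _ _)]

lemma measureReal_lt_abs_sum_le_sum_fiber [IsFiniteMeasure P] {ι κ : Type*} [Fintype κ]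
    [DecidableEq κ] [Nonempty κ] (X : ι → Ω → ℝ) (D : Finset ι) (g : ι → κ) (x : ℝ) :
    P.real {ω | x < |∑ i ∈ D, X i ω|}
      ≤ ∑ k, P.real {ω | x / Fintype.card κ < |∑ i ∈ D with g i = k, X i ω|} := by
  refine (measureReal_mono fun ω hω => ?_).trans (measureReal_iUnion_fintype_le _)
  by_contra! hk
  simp only [Set.mem_iUnion, Set.mem_ofPred_eq, not_exists, not_lt] at hk hω
  refine hω.not_ge ?_
  calc |∑ i ∈ D, X i ω| = |∑ k, ∑ i ∈ D with g i = k, X i ω| := by rw [Finset.sum_fiberwise]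
    _ ≤ ∑ k, |∑ i ∈ D with g i = k, X i ω| := Finset.abs_sum_le_sum_abs _ _
    _ ≤ ∑ _k : κ, x / Fintype.card κ := Finset.sum_le_sum fun k _ => hk k
    _ = x := by simp [mul_div_cancel₀]

lemma mul_exp_pow_mul_exp_neg_le {δ r c y : ℝ} (n : ℕ) (hc : 0 < c) (hy : 0 ≤ y) (hr : 0 ≤ r)
    (hδ : 0 ≤ δ) (hδr : δ * r ≤ c / 2) (hn : n ≤ r * y) :
    n * Real.exp δ ^ n * Real.exp (-c * y) ≤ 2 * r / c := by
  have hexp : Real.exp δ ^ n ≤ Real.exp (c / 2 * y) := by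
    rw [← Real.exp_nat_mul]
    refine Real.exp_le_exp.mpr ?_
    calc n * δ ≤ r * y * δ := by gcongr
      _ = δ * r * y := by ring
      _ ≤ c / 2 * y := by gcongr
  calc n * Real.exp δ ^ n * Real.exp (-c * y)
      ≤ r * y * Real.exp (c / 2 * y) * Real.exp (-c * y) := by gcongr
    _ = 2 * r / c * ((c / 2 * y) * Real.exp (-(c / 2 * y))) := by
        rw [mul_assoc, ← Real.exp_add, show c / 2 * y + -c * y = -(c / 2 * y) by ring]
        field_simp
    _ ≤ 2 * r / c * 1 := by
        gcongr
        exact (Real.mul_exp_neg_le_exp_neg_one _).trans (Real.exp_le_one_iff.mpr (by simp))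
    _ = 2 * r / c := mul_one _

end Exponential

section Lattice

variable {N p : ℕ}

lemma natAbs_sub_le_latDist (s t : Fin N → ℤ) (i : Fin N) : (s i - t i).natAbs ≤ latDist s t :=
  Finset.le_sup (f := fun i => (s i - t i).natAbs) (Finset.mem_univ i)

lemma summable_exp_neg_mul_natAbs {c : ℝ} (hc : 0 < c) :
    Summable fun j : ℤ => Real.exp (-c * j.natAbs) := by
  have h : Summable fun j : ℕ => Real.exp (-c * j) := by
    simpa only [mul_comm] using Real.summable_exp_nat_mul_iff.mpr (neg_neg_of_pos hc)
  exact .of_nat_of_neg (by simpa using h) (by simpa using h)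

lemma sum_exp_neg_mul_natAbs_sub_le_tsum {c : ℝ} (hc : 0 < c) (x : ℤ) (U : Finset ℤ) :
    ∑ j ∈ U, Real.exp (-c * (x - j).natAbs) ≤ ∑' j : ℤ, Real.exp (-c * j.natAbs) := by
  have hsum : Summable fun j : ℤ => Real.exp (-c * (x - j).natAbs) :=
    (Equiv.subLeft x).summable_iff.mpr (summable_exp_neg_mul_natAbs hc)
  exact (hsum.sum_le_tsum U fun _ _ => (Real.exp_pos _).le).trans_eq
    ((Equiv.subLeft x).tsum_eq fun j : ℤ => Real.exp (-c * j.natAbs))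

lemma exp_neg_mul_latDist_le_prod (hN : 0 < N) {c : ℝ} (hc : 0 ≤ c) (s t : Fin N → ℤ) :
    Real.exp (-c * latDist s t) ≤ ∏ i, Real.exp (-(c / N) * (s i - t i).natAbs) := by
  rw [← Real.exp_sum, ← Finset.mul_sum]
  refine Real.exp_le_exp.mpr ?_
  have hN' : (N : ℝ) ≠ 0 := by exact_mod_cast hN.ne'
  have hsum : ∑ i, ((s i - t i).natAbs : ℝ) ≤ N * latDist s t := by
    calc ∑ i, ((s i - t i).natAbs : ℝ) ≤ ∑ _i : Fin N, (latDist s t : ℝ) := by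
          gcongr with i
          exact natAbs_sub_le_latDist s t i
      _ = N * latDist s t := by simp
  calc -c * latDist s t = -(c / N) * (N * latDist s t) := by field_simp
    _ ≤ -(c / N) * ∑ i, ((s i - t i).natAbs : ℝ) :=
        mul_le_mul_of_nonpos_left hsum (neg_nonpos.mpr (by positivity))

lemma sum_exp_neg_mul_latDist_le (hN : 0 < N) {c : ℝ} (hc : 0 < c) (s : Fin N → ℤ)
    (T : Finset (Fin N → ℤ)) :
    ∑ t ∈ T, Real.exp (-c * latDist s t) ≤ (∑' j : ℤ, Real.exp (-(c / N) * j.natAbs)) ^ N := by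
  have hcN : 0 < c / N := div_pos hc (by exact_mod_cast hN)
  set U : Fin N → Finset ℤ := fun i => T.image fun t => t i
  have hTU : T ⊆ Fintype.piFinset U := fun t ht =>
    Fintype.mem_piFinset.mpr fun i => Finset.mem_image_of_mem (fun t => t i) ht
  calc ∑ t ∈ T, Real.exp (-c * latDist s t)
      ≤ ∑ t ∈ T, ∏ i, Real.exp (-(c / N) * (s i - t i).natAbs) :=
        Finset.sum_le_sum fun t _ => exp_neg_mul_latDist_le_prod hN hc.le s t
    _ ≤ ∑ t ∈ Fintype.piFinset U, ∏ i, Real.exp (-(c / N) * (s i - t i).natAbs) :=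
        Finset.sum_le_sum_of_subset_of_nonneg hTU fun _ _ _ => by positivity
    _ = ∏ i, ∑ j ∈ U i, Real.exp (-(c / N) * (s i - j).natAbs) :=
        (Finset.prod_univ_sum U fun i j => Real.exp (-(c / N) * (s i - j).natAbs)).symm
    _ ≤ ∏ _i : Fin N, ∑' j : ℤ, Real.exp (-(c / N) * j.natAbs) := by
        gcongr with i
        exact sum_exp_neg_mul_natAbs_sub_le_tsum hcN (s i) (U i)
    _ = (∑' j : ℤ, Real.exp (-(c / N) * j.natAbs)) ^ N := by simp

/-- The position of the cube of side `p` containing `s`, in the tiling of `ℤ^N` by translates of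
`[0, p)^N` under `pℤ^N`. -/
def blockIdx (p : ℕ) (s : Fin N → ℤ) : Fin N → ℤ := fun i => s i / p

/-- The coordinatewise parity of the position of the cube of side `p` containing `s`. It splits the
tiling into `2 ^ N` classes of cubes which are pairwise at distance at least `p`. -/
def blockParity (p : ℕ) (s : Fin N → ℤ) : Fin N → ZMod 2 := fun i => (blockIdx p s i : ZMod 2)

lemma le_natAbs_sub_of_ediv_modEq_two (hp : 0 < p) {x y : ℤ} (hne : x / p ≠ y / p)
    (hmod : x / p ≡ y / p [ZMOD 2]) : p ≤ (x - y).natAbs := by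
  wlog hlt : x / p < y / p generalizing x y
  · rw [← Int.natAbs_neg, neg_sub]
    exact this hne.symm hmod.symm (lt_of_le_of_ne (not_lt.mp hlt) hne.symm)
  have hp' : (0 : ℤ) < p := by exact_mod_cast hp
  have hgap : x / p + 1 + 1 ≤ y / p := by
    have := hmod.dvd
    omega
  have : x + p ≤ y := by
    calc x + p ≤ (x / p + 1) * p + p := by gcongr; exact (Int.lt_ediv_add_one_mul_self x hp').le
      _ = (x / p + 1 + 1) * p := by ring
      _ ≤ y / p * p := by gcongr
      _ ≤ y := Int.ediv_mul_le y hp'.ne'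
  omega

lemma le_latDist_of_blockParity_eq (hp : 0 < p) {s t : Fin N → ℤ}
    (hne : blockIdx p s ≠ blockIdx p t) (hpar : blockParity p s = blockParity p t) :
    p ≤ latDist s t := by
  obtain ⟨i, hi⟩ := Function.ne_iff.mp hne
  have hmod := (ZMod.intCast_eq_intCast_iff _ _ 2).mp (congrFun hpar i)
  exact (le_natAbs_sub_of_ediv_modEq_two hp hi hmod).trans (natAbs_sub_le_latDist s t i)

lemma card_filter_blockIdx_eq_le (hp : 0 < p) (D : Finset (Fin N → ℤ)) (b : Fin N → ℤ) :
    (D.filter fun s => blockIdx p s = b).card ≤ p ^ N := by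
  have hp' : (0 : ℤ) < p := by exact_mod_cast hp
  calc (D.filter fun s => blockIdx p s = b).card
      ≤ (Fintype.piFinset fun i => Finset.Ico (b i * p) (b i * p + p)).card := by
        refine Finset.card_le_card fun s hs => Fintype.mem_piFinset.mpr fun i => ?_
        rw [Finset.mem_Ico, ← Int.ediv_eq_iff_of_pos hp']
        exact congrFun (Finset.mem_filter.mp hs).2 i
    _ = p ^ N := by simp

lemma card_image_blockIdx_obsIdx_le (hp : 0 < p) (n : Fin N → ℕ) :
    ((obsIdx n).image (blockIdx p)).card ≤ ∏ i, (n i / p + 1) := by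
  have hp' : (0 : ℤ) < p := by exact_mod_cast hp
  calc ((obsIdx n).image (blockIdx p)).card
      ≤ (Fintype.piFinset fun i => Finset.Icc (0 : ℤ) (n i / p)).card := by
        refine Finset.card_le_card fun b hb => Fintype.mem_piFinset.mpr fun i => ?_
        obtain ⟨s, hs, rfl⟩ := Finset.mem_image.mp hb
        obtain ⟨hs1, hsn⟩ := Finset.mem_Icc.mp hs
        exact Finset.mem_Icc.mpr ⟨Int.ediv_nonneg (zero_le_one.trans (hs1 i)) hp'.le,
          Int.ediv_le_ediv hp' (hsn i)⟩
    _ = ∏ i, (n i / p + 1) := by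
        rw [Fintype.card_piFinset]
        refine Finset.prod_congr rfl fun i _ => ?_
        rw [Int.card_Icc, sub_zero]
        norm_cast

lemma card_image_blockIdx_obsIdx_le_mul {C y : ℝ} (hC : 0 < C) (hy : 1 ≤ y) {n : Fin N → ℕ}
    (hn : ∀ i, C * n i ≤ y ^ (N + 1)) (hp : y ^ N ≤ p) :
    (((obsIdx n).image (blockIdx p)).card : ℝ) ≤ (1 / C + 1) ^ N * p := by
  have hyN : 0 < y ^ N := by positivity
  have hp' : (0 : ℝ) < p := hyN.trans_le hp
  have hside (i : Fin N) : ((n i / p : ℕ) : ℝ) + 1 ≤ (1 / C + 1) * y := by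
    have hdiv : (n i : ℝ) / p ≤ 1 / C * y := by
      calc (n i : ℝ) / p ≤ (y ^ (N + 1) / C) / y ^ N := by
            gcongr
            exact (le_div_iff₀' hC).mpr (hn i)
        _ = 1 / C * y := by
            field_simp
            exact pow_succ y N
    linarith [Nat.cast_div_le (α := ℝ) (m := n i) (n := p)]
  calc (((obsIdx n).image (blockIdx p)).card : ℝ) ≤ ∏ i, (((n i / p : ℕ) : ℝ) + 1) := by
        exact_mod_cast card_image_blockIdx_obsIdx_le (by exact_mod_cast hp') n
    _ ≤ ∏ _i : Fin N, (1 / C + 1) * y := by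
        gcongr with i
        exact hside i
    _ = (1 / C + 1) ^ N * y ^ N := by simp [mul_pow]
    _ ≤ (1 / C + 1) ^ N * p := by gcongr

lemma exists_blockSide (hN : 0 < N) {C : ℝ} (hC : 0 < C) {n : Fin N → ℕ} (hn : ∀ i, 0 < n i)
    (hnC : ∀ i j, C * (n j : ℝ) ≤ n i) :
    ∃ p : ℕ, 0 < p ∧ (p : ℝ) ^ N ≤ 2 ^ N * (∏ i, (n i : ℝ)) ^ ((N : ℝ) / (N + 1)) ∧
      (((obsIdx n).image (blockIdx p)).card : ℝ) ≤ (1 / C + 1) ^ N * p := by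
  have hM : 1 ≤ ∏ i, (n i : ℝ) := Finset.one_le_prod fun i _ => by exact_mod_cast hn i
  obtain ⟨y, hy, hyM⟩ : ∃ y : ℝ, 1 ≤ y ∧ y ^ (N * (N + 1)) = ∏ i, (n i : ℝ) :=
    ⟨_, Real.one_le_rpow hM (by positivity),
      Real.rpow_inv_natCast_pow (zero_le_one.trans hM) (by positivity)⟩
  have hy0 : 0 ≤ y := zero_le_one.trans hy
  have hyN : 1 ≤ y ^ N := one_le_pow₀ hy
  have hyNN : (∏ i, (n i : ℝ)) ^ ((N : ℝ) / (N + 1)) = (y ^ N) ^ N := by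
    rw [← hyM, ← pow_mul, ← Real.rpow_natCast, ← Real.rpow_mul hy0, ← Real.rpow_natCast]
    congr 1
    push_cast
    field_simp
  have hside (i : Fin N) : C * n i ≤ y ^ (N + 1) := by
    refine le_of_pow_le_pow_left₀ hN.ne' (by positivity) ?_
    calc (C * (n i : ℝ)) ^ N = ∏ _j : Fin N, C * (n i : ℝ) := by simp
      _ ≤ ∏ j, (n j : ℝ) := by
          gcongr with j
          exact hnC j i
      _ = (y ^ (N + 1)) ^ N := by rw [← hyM, mul_comm, pow_mul]
  have hceil : (⌈y ^ N⌉₊ : ℝ) ≤ 2 * y ^ N := by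
    linarith [Nat.ceil_lt_add_one (zero_le_one.trans hyN)]
  refine ⟨⌈y ^ N⌉₊, Nat.ceil_pos.mpr (zero_lt_one.trans_le hyN), ?_,
    card_image_blockIdx_obsIdx_le_mul hC hy hside (Nat.le_ceil _)⟩
  rw [hyNN, ← mul_pow]
  gcongr

end Lattice

section Mixing

open ProbabilityTheory

variable {N : ℕ} {Ω E : Type*} {mΩ : MeasurableSpace Ω} [MeasurableSpace E] {P : Measure Ω}
  {Z : (Fin N → ℤ) → Ω → E}

lemma fieldSigma_le (hZ : ∀ s, Measurable (Z s)) (I : Set (Fin N → ℤ)) : fieldSigma Z I ≤ mΩ :=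
  iSup₂_le fun s _ => (hZ s).comap_le

lemma fieldSigma_mono {I J : Set (Fin N → ℤ)} (h : I ⊆ J) : fieldSigma Z I ≤ fieldSigma Z J :=
  biSup_mono h

lemma measurable_fieldSigma {I : Set (Fin N → ℤ)} {s : Fin N → ℤ} (hs : s ∈ I) :
    Measurable[fieldSigma Z I] (Z s) :=
  Measurable.of_comap_le <|
    le_iSup₂ (f := fun s (_ : s ∈ I) => MeasurableSpace.comap (Z s) inferInstance) s hs

lemma alphaMix_nonneg (k : ℕ) : 0 ≤ alphaMix P Z k := by
  refine Real.sSup_nonneg ?_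
  rintro _ ⟨-, -, -, A, B, -, -, rfl⟩
  exact abs_nonneg _

lemma sum_alphaMix_latDist_le {c0 c1 : ℝ} (hN : 0 < N) (hc0 : 0 ≤ c0) (hc1 : 0 < c1)
    (hα : ∀ k : ℕ, alphaMix P Z k ≤ c0 * Real.exp (-c1 * k)) (s : Fin N → ℤ)
    (T : Finset (Fin N → ℤ)) :
    ∑ t ∈ T, alphaMix P Z (latDist s t)
      ≤ c0 * (∑' j : ℤ, Real.exp (-(c1 / N) * j.natAbs)) ^ N := by
  calc ∑ t ∈ T, alphaMix P Z (latDist s t)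
      ≤ ∑ t ∈ T, c0 * Real.exp (-c1 * latDist s t) := Finset.sum_le_sum fun t _ => hα _
    _ = c0 * ∑ t ∈ T, Real.exp (-c1 * latDist s t) := (Finset.mul_sum ..).symm
    _ ≤ c0 * (∑' j : ℤ, Real.exp (-(c1 / N) * j.natAbs)) ^ N := by
        gcongr
        exact sum_exp_neg_mul_latDist_le hN hc1 s T

lemma ae_prod_mem_Icc_zero_pow_card {ι : Type*} {T : Finset ι} {W : ι → Ω → ℝ} {a : ℝ}
    (hW : ∀ i ∈ T, ∀ᵐ ω ∂P, W i ω ∈ Set.Icc 0 a) :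
    ∀ᵐ ω ∂P, ∏ i ∈ T, W i ω ∈ Set.Icc 0 (a ^ T.card) := by
  filter_upwards [(Finset.eventually_all T).mpr hW] with ω h
  exact ⟨Finset.prod_nonneg fun i hi => (h i hi).1,
    (Finset.prod_le_prod (fun i hi => (h i hi).1) fun i hi => (h i hi).2).trans_eq
      (Finset.prod_const a)⟩

variable [IsProbabilityMeasure P] {k : ℕ}

lemma measureReal_inter_sub_le_alphaMix {I J : Set (Fin N → ℤ)}
    (hIJ : ∀ s ∈ I, ∀ t ∈ J, k ≤ latDist s t) {A B : Set Ω}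
    (hA : MeasurableSet[fieldSigma Z I] A) (hB : MeasurableSet[fieldSigma Z J] B) :
    P.real (A ∩ B) - P.real A * P.real B ≤ alphaMix P Z k := by
  refine (le_abs_self _).trans (le_csSup ⟨1, ?_⟩ ⟨I, J, hIJ, A, B, hA, hB, rfl⟩)
  rintro _ ⟨-, -, -, A, B, -, -, rfl⟩
  exact abs_sub_le_of_nonneg_of_le measureReal_nonneg measureReal_le_one
    (mul_nonneg measureReal_nonneg measureReal_nonneg)
    (mul_le_one₀ measureReal_le_one measureReal_nonneg measureReal_le_one)

lemma covariance_le_alphaMix (hZ : ∀ s, Measurable (Z s)) {I J : Set (Fin N → ℤ)}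
    (hIJ : ∀ s ∈ I, ∀ t ∈ J, k ≤ latDist s t) {X Y : Ω → ℝ} {a b c d : ℝ}
    (hXm : Measurable[fieldSigma Z I] X) (hYm : Measurable[fieldSigma Z J] Y)
    (hX : ∀ᵐ ω ∂P, X ω ∈ Set.Icc a b) (hY : ∀ᵐ ω ∂P, Y ω ∈ Set.Icc c d) :
    cov[X, Y; P] ≤ (b - a) * ((d - c) * alphaMix P Z k) :=
  covariance_le_of_measureReal_inter_sub_le (fieldSigma_le hZ I) (fieldSigma_le hZ J) hXm hYm hX hY
    fun _ _ hA hB => measureReal_inter_sub_le_alphaMix hIJ hA hB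

lemma integral_mul_le_alphaMix (hZ : ∀ s, Measurable (Z s)) {I J : Set (Fin N → ℤ)}
    (hIJ : ∀ s ∈ I, ∀ t ∈ J, k ≤ latDist s t) {X Y : Ω → ℝ} {a b : ℝ}
    (hXm : Measurable[fieldSigma Z I] X) (hYm : Measurable[fieldSigma Z J] Y)
    (hX : ∀ᵐ ω ∂P, X ω ∈ Set.Icc 0 a) (hY : ∀ᵐ ω ∂P, Y ω ∈ Set.Icc 0 b) :
    ∫ ω, X ω * Y ω ∂P ≤ (∫ ω, X ω ∂P) * ∫ ω, Y ω ∂P + a * b * alphaMix P Z k := by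
  have hX2 : MemLp X 2 P :=
    memLp_of_bounded hX (hXm.mono (fieldSigma_le hZ I) le_rfl).aestronglyMeasurable 2
  have hY2 : MemLp Y 2 P :=
    memLp_of_bounded hY (hYm.mono (fieldSigma_le hZ J) le_rfl).aestronglyMeasurable 2
  have hcov := covariance_le_alphaMix hZ hIJ hXm hYm hX hY
  simp only [covariance_eq_sub hX2 hY2, Pi.mul_apply] at hcov
  linarith

lemma integral_prod_le_prod_integral_add_alphaMix (hZ : ∀ s, Measurable (Z s)) {ι : Type*}
    {T : Finset ι} {S : ι → Set (Fin N → ℤ)} {W : ι → Ω → ℝ} {a : ℝ}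
    (hS : (T : Set ι).Pairwise fun i j => ∀ s ∈ S i, ∀ t ∈ S j, k ≤ latDist s t)
    (hWm : ∀ i ∈ T, Measurable[fieldSigma Z (S i)] (W i))
    (hW : ∀ i ∈ T, ∀ᵐ ω ∂P, W i ω ∈ Set.Icc 0 a) :
    ∫ ω, ∏ i ∈ T, W i ω ∂P
      ≤ ∏ i ∈ T, ∫ ω, W i ω ∂P + T.card * (a ^ T.card * alphaMix P Z k) := by
  induction T using Finset.cons_induction with
  | empty => simp
  | cons i T hi ih =>
    simp only [Finset.forall_mem_cons, Finset.coe_cons] at hS hWm hW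
    obtain ⟨hWmi, hWm⟩ := hWm
    obtain ⟨hWi, hW⟩ := hW
    have ha : 0 ≤ a := by
      obtain ⟨ω, hω⟩ := hWi.exists
      exact hω.1.trans hω.2
    have hα := alphaMix_nonneg (P := P) (Z := Z) k
    have hEi : ∫ ω, W i ω ∂P ∈ Set.Icc 0 a :=
      (convex_Icc 0 a).integral_mem isClosed_Icc hWi <|
        .of_mem_Icc 0 a (hWmi.mono (fieldSigma_le hZ _) le_rfl).aemeasurable hWi
    have hsep : ∀ s ∈ S i, ∀ t ∈ ⋃ j ∈ T, S j, k ≤ latDist s t := by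
      simp only [Set.mem_iUnion, exists_prop]
      rintro s hs t ⟨j, hj, ht⟩
      exact hS (Set.mem_insert i _) (Set.mem_insert_of_mem i hj)
        (fun h => hi (h ▸ hj)) s hs t ht
    have hprodm : Measurable[fieldSigma Z (⋃ j ∈ T, S j)] fun ω => ∏ j ∈ T, W j ω :=
      Finset.measurable_fun_prod T fun j hj =>
        (hWm j hj).mono (fieldSigma_mono (Set.subset_biUnion_of_mem (u := S) hj)) le_rfl
    simp_rw [Finset.prod_cons, Finset.card_cons]
    calc ∫ ω, W i ω * ∏ j ∈ T, W j ω ∂P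
        ≤ (∫ ω, W i ω ∂P) * ∫ ω, ∏ j ∈ T, W j ω ∂P + a * a ^ T.card * alphaMix P Z k :=
          integral_mul_le_alphaMix hZ hsep hWmi hprodm hWi
            (ae_prod_mem_Icc_zero_pow_card hW)
      _ ≤ (∫ ω, W i ω ∂P) * (∏ j ∈ T, ∫ ω, W j ω ∂P + T.card * (a ^ T.card * alphaMix P Z k))
            + a * a ^ T.card * alphaMix P Z k := by
          gcongr
          · exact hEi.1
          · exact ih (hS.mono (Set.subset_insert _ _)) hWm hW
      _ ≤ (∫ ω, W i ω ∂P) * ∏ j ∈ T, ∫ ω, W j ω ∂P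
            + a * (T.card * (a ^ T.card * alphaMix P Z k)) + a * a ^ T.card * alphaMix P Z k := by
          rw [mul_add]
          gcongr
          exact hEi.2
      _ = _ := by
          push_cast
          ring

end Mixing

section BoundedField

open ProbabilityTheory

variable {N : ℕ} {Ω : Type*} {mΩ : MeasurableSpace Ω} {P : Measure Ω}
  {Z : (Fin N → ℤ) → Ω → ℝ} {B K l δ r c0 c1 : ℝ} {p : ℕ} {D : Finset (Fin N → ℤ)}

lemma ae_abs_sum_le_card_mul {ι : Type*} {X : ι → Ω → ℝ} (D : Finset ι)
    (hB : ∀ i, ∀ᵐ ω ∂P, |X i ω| ≤ B) : ∀ᵐ ω ∂P, |∑ i ∈ D, X i ω| ≤ D.card * B := by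
  filter_upwards [(Finset.eventually_all D).mpr fun i _ => hB i] with ω h
  exact (Finset.abs_sum_le_sum_abs _ _).trans <|
    (Finset.sum_le_card_nsmul D _ B h).trans_eq (nsmul_eq_mul _ _)

variable [IsProbabilityMeasure P]

lemma covariance_field_le_alphaMix (hZ : ∀ s, Measurable (Z s)) (hB : ∀ s, ∀ᵐ ω ∂P, |Z s ω| ≤ B)
    (s t : Fin N → ℤ) : cov[Z s, Z t; P] ≤ 4 * B ^ 2 * alphaMix P Z (latDist s t) := by
  have hIcc (s : Fin N → ℤ) : ∀ᵐ ω ∂P, Z s ω ∈ Set.Icc (-B) B := (hB s).mono fun _ => abs_le.mp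
  calc cov[Z s, Z t; P] ≤ (B - -B) * ((B - -B) * alphaMix P Z (latDist s t)) :=
        covariance_le_alphaMix hZ (by simp) (measurable_fieldSigma (Set.mem_singleton s))
          (measurable_fieldSigma (Set.mem_singleton t)) (hIcc s) (hIcc t)
    _ = 4 * B ^ 2 * alphaMix P Z (latDist s t) := by ring

lemma variance_sum_le_card_mul (hZ : ∀ s, Measurable (Z s)) (hB : ∀ s, ∀ᵐ ω ∂P, |Z s ω| ≤ B)
    (hK : ∀ s (T : Finset (Fin N → ℤ)), ∑ t ∈ T, alphaMix P Z (latDist s t) ≤ K)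
    (D : Finset (Fin N → ℤ)) : Var[fun ω => ∑ s ∈ D, Z s ω; P] ≤ D.card * (4 * B ^ 2 * K) := by
  have hZ2 (s : Fin N → ℤ) : MemLp (Z s) 2 P :=
    .of_bound (hZ s).aestronglyMeasurable B (hB s)
  calc Var[fun ω => ∑ s ∈ D, Z s ω; P] = ∑ s ∈ D, ∑ t ∈ D, cov[Z s, Z t; P] :=
        variance_fun_sum' fun s _ => hZ2 s
    _ ≤ ∑ s ∈ D, 4 * B ^ 2 * ∑ t ∈ D, alphaMix P Z (latDist s t) := by
        simp only [Finset.mul_sum]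
        gcongr with s _ t
        exact covariance_field_le_alphaMix hZ hB s t
    _ ≤ ∑ _s ∈ D, 4 * B ^ 2 * K := by
        gcongr with s
        exact hK s D
    _ = D.card * (4 * B ^ 2 * K) := by simp

lemma mgf_sum_le_exp_div (hZ : ∀ s, Measurable (Z s)) (hB : ∀ s, ∀ᵐ ω ∂P, |Z s ω| ≤ B)
    (hmean : ∀ s, ∫ ω, Z s ω ∂P = 0)
    (hK : ∀ s (T : Finset (Fin N → ℤ)), ∑ t ∈ T, alphaMix P Z (latDist s t) ≤ K) {q : ℝ}
    (hq : 0 < q) (hDq : D.card ≤ q) (hl : |l| * (q * B) ≤ 1) :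
    mgf (fun ω => ∑ s ∈ D, Z s ω) P l ≤ Real.exp (4 * K / q) := by
  have hB0 : 0 ≤ B := (hB 0).exists.elim fun _ => (abs_nonneg _).trans
  have hK0 : 0 ≤ K := by simpa using hK 0 ∅
  have hsum : ∀ᵐ ω ∂P, |∑ s ∈ D, Z s ω| ≤ q * B := by
    filter_upwards [ae_abs_sum_le_card_mul D hB] with ω h
    exact h.trans (by gcongr)
  have hsum0 : ∫ ω, ∑ s ∈ D, Z s ω ∂P = 0 := by
    rw [integral_finsetSum _ fun s _ => .of_bound (hZ s).aestronglyMeasurable B (hB s)]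
    simp [hmean]
  refine (mgf_le_exp_sq_mul_variance (Finset.measurable_fun_sum D fun s _ => hZ s).aemeasurable
    hsum hsum0 hl).trans (Real.exp_le_exp.mpr ?_)
  calc l ^ 2 * Var[fun ω => ∑ s ∈ D, Z s ω; P] ≤ l ^ 2 * (q * (4 * B ^ 2 * K)) := by
        gcongr
        exact (variance_sum_le_card_mul hZ hB hK D).trans (by gcongr)
    _ = (|l| * (q * B)) ^ 2 * (4 * K / q) := by
        rw [mul_pow, sq_abs]
        field_simp
    _ ≤ 1 ^ 2 * (4 * K / q) := by gcongr
    _ = 4 * K / q := by rw [one_pow, one_mul]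

lemma mgf_sum_le_prod_mgf_fiber_add_alphaMix (hZ : ∀ s, Measurable (Z s)) {κ : Type*}
    [DecidableEq κ] {g : (Fin N → ℤ) → κ} {k : ℕ}
    (hg : ∀ s ∈ D, ∀ t ∈ D, g s ≠ g t → k ≤ latDist s t)
    (hδ : ∀ b, ∀ᵐ ω ∂P, l * ∑ s ∈ D with g s = b, Z s ω ≤ δ) :
    mgf (fun ω => ∑ s ∈ D, Z s ω) P l
      ≤ ∏ b ∈ D.image g, mgf (fun ω => ∑ s ∈ D with g s = b, Z s ω) P l
        + (D.image g).card * (Real.exp δ ^ (D.image g).card * alphaMix P Z k) := by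
  set S : κ → Set (Fin N → ℤ) := fun b => D.filter fun s => g s = b
  have hsep : (D.image g : Set κ).Pairwise fun b b' => ∀ s ∈ S b, ∀ t ∈ S b', k ≤ latDist s t := by
    intro b _ b' _ hbb' s hs t ht
    obtain ⟨hsD, rfl⟩ := Finset.mem_filter.mp hs
    obtain ⟨htD, rfl⟩ := Finset.mem_filter.mp ht
    exact hg s hsD t htD hbb'
  have hm (b : κ) :
      Measurable[fieldSigma Z (S b)] fun ω => Real.exp (l * ∑ s ∈ D with g s = b, Z s ω) :=
    ((Finset.measurable_fun_sum _ fun s hs => measurable_fieldSigma hs).const_mul l).exp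
  have hIcc (b : κ) :
      ∀ᵐ ω ∂P, Real.exp (l * ∑ s ∈ D with g s = b, Z s ω) ∈ Set.Icc 0 (Real.exp δ) :=
    (hδ b).mono fun _ h => ⟨(Real.exp_pos _).le, Real.exp_le_exp.mpr h⟩
  calc mgf (fun ω => ∑ s ∈ D, Z s ω) P l
      = ∫ ω, ∏ b ∈ D.image g, Real.exp (l * ∑ s ∈ D with g s = b, Z s ω) ∂P := by
        refine integral_congr_ae (.of_forall fun ω => ?_)
        simp only [← Real.exp_sum, ← Finset.mul_sum]
        rw [Finset.sum_fiberwise_of_maps_to fun s hs => Finset.mem_image_of_mem g hs]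
    _ ≤ _ := integral_prod_le_prod_integral_add_alphaMix hZ hsep (fun b _ => hm b)
        fun b _ => hIcc b

lemma mgf_sum_le_of_blockParity_eq (hZ : ∀ s, Measurable (Z s)) (hB : ∀ s, ∀ᵐ ω ∂P, |Z s ω| ≤ B)
    (hmean : ∀ s, ∫ ω, Z s ω ∂P = 0)
    (hK : ∀ s (T : Finset (Fin N → ℤ)), ∑ t ∈ T, alphaMix P Z (latDist s t) ≤ K) (hp : 0 < p)
    (hD : ∀ s ∈ D, ∀ t ∈ D, blockParity p s = blockParity p t)
    (hl : |l| * (p ^ N * B) ≤ δ) (hδ : δ ≤ 1) :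
    mgf (fun ω => ∑ s ∈ D, Z s ω) P l
      ≤ Real.exp (4 * K / p ^ N) ^ (D.image (blockIdx p)).card
        + (D.image (blockIdx p)).card
          * (Real.exp δ ^ (D.image (blockIdx p)).card * alphaMix P Z p) := by
  have hB0 : 0 ≤ B := (hB 0).exists.elim fun _ => (abs_nonneg _).trans
  have hcard (b : Fin N → ℤ) : ((D.filter fun s => blockIdx p s = b).card : ℝ) ≤ p ^ N := by
    exact_mod_cast card_filter_blockIdx_eq_le hp D b
  have hbound (b : Fin N → ℤ) : ∀ᵐ ω ∂P, l * ∑ s ∈ D with blockIdx p s = b, Z s ω ≤ δ := by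
    filter_upwards [ae_abs_sum_le_card_mul (D.filter fun s => blockIdx p s = b) hB] with ω h
    calc l * ∑ s ∈ D with blockIdx p s = b, Z s ω
        ≤ |l| * |∑ s ∈ D with blockIdx p s = b, Z s ω| := by
          rw [← abs_mul]
          exact le_abs_self _
      _ ≤ |l| * (p ^ N * B) := by
          gcongr
          exact h.trans (by gcongr; exact hcard b)
      _ ≤ δ := hl
  refine (mgf_sum_le_prod_mgf_fiber_add_alphaMix hZ (fun s hs t ht hne =>
    le_latDist_of_blockParity_eq hp hne (hD s hs t ht)) hbound).trans ?_
  gcongr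
  exact (Finset.prod_le_prod (fun _ _ => mgf_nonneg) fun b _ => mgf_sum_le_exp_div hZ hB hmean hK
    (by positivity) (hcard b) (hl.trans hδ)).trans_eq (Finset.prod_const _)

lemma mgf_sum_le_of_alphaMix_le_exp (hN : 0 < N) (hZ : ∀ s, Measurable (Z s))
    (hB : ∀ s, ∀ᵐ ω ∂P, |Z s ω| ≤ B) (hmean : ∀ s, ∫ ω, Z s ω ∂P = 0)
    (hK : ∀ s (T : Finset (Fin N → ℤ)), ∑ t ∈ T, alphaMix P Z (latDist s t) ≤ K)
    (hc1 : 0 < c1) (hα : alphaMix P Z p ≤ c0 * Real.exp (-c1 * p)) (hp : 0 < p) (hr : 0 ≤ r)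
    (hD : ∀ s ∈ D, ∀ t ∈ D, blockParity p s = blockParity p t)
    (hDr : (D.image (blockIdx p)).card ≤ r * p) (hl : |l| * (p ^ N * B) ≤ δ) (hδ0 : 0 ≤ δ)
    (hδ : δ ≤ 1) (hδr : δ * r ≤ c1 / 2) :
    mgf (fun ω => ∑ s ∈ D, Z s ω) P l ≤ Real.exp (4 * K * r) + c0 * (2 * r / c1) := by
  refine (mgf_sum_le_of_blockParity_eq hZ hB hmean hK hp hD hl hδ).trans ?_
  set m := (D.image (blockIdx p)).card
  have hK0 : 0 ≤ K := by simpa using hK 0 ∅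
  have hc0 : 0 ≤ c0 := nonneg_of_mul_nonneg_left ((alphaMix_nonneg p).trans hα) (Real.exp_pos _)
  have hp' : (0 : ℝ) < p := by exact_mod_cast hp
  have hpN : (p : ℝ) ≤ p ^ N := le_self_pow₀ (by exact_mod_cast hp) hN.ne'
  gcongr ?_ + ?_
  · rw [← Real.exp_nat_mul]
    refine Real.exp_le_exp.mpr ?_
    calc m * (4 * K / p ^ N) ≤ r * p * (4 * K / p) := by gcongr
      _ = 4 * K * r := by field_simp
  · calc m * (Real.exp δ ^ m * alphaMix P Z p)
        ≤ m * (Real.exp δ ^ m * (c0 * Real.exp (-c1 * p))) := by gcongr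
      _ = c0 * (m * Real.exp δ ^ m * Real.exp (-c1 * p)) := by ring
      _ ≤ c0 * (2 * r / c1) := by
          gcongr
          exact mul_exp_pow_mul_exp_neg_le m hc1 hp'.le hr hδ0 hδr hDr

lemma measureReal_lt_abs_sum_le_of_alphaMix_le_exp (hN : 0 < N) (hZ : ∀ s, Measurable (Z s))
    (hB : ∀ s, ∀ᵐ ω ∂P, |Z s ω| ≤ B) (hmean : ∀ s, ∫ ω, Z s ω ∂P = 0)
    (hK : ∀ s (T : Finset (Fin N → ℤ)), ∑ t ∈ T, alphaMix P Z (latDist s t) ≤ K)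
    (hc1 : 0 < c1) (hα : alphaMix P Z p ≤ c0 * Real.exp (-c1 * p)) (hp : 0 < p) (hr : 0 ≤ r)
    (hDr : (D.image (blockIdx p)).card ≤ r * p) (hB0 : 0 < B) (hδ0 : 0 ≤ δ) (hδ : δ ≤ 1)
    (hδr : δ * r ≤ c1 / 2) (ε : ℝ) :
    P.real {ω | ε < |∑ s ∈ D, Z s ω|}
      ≤ 2 ^ N * (2 * (Real.exp (4 * K * r) + c0 * (2 * r / c1))
        * Real.exp (-(δ / (p ^ N * B) * (ε / 2 ^ N)))) := by
  have hq : 0 < (p : ℝ) ^ N * B := by positivity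
  set l := δ / (p ^ N * B)
  have hl0 : 0 ≤ l := by positivity
  have hl : |l| * (p ^ N * B) ≤ δ := by rw [abs_of_nonneg hl0, div_mul_cancel₀ _ hq.ne']
  have hclasses : (Fintype.card (Fin N → ZMod 2) : ℝ) = 2 ^ N := by simp [ZMod.card]
  set A := Real.exp (4 * K * r) + c0 * (2 * r / c1)
  suffices hclass : ∀ v : Fin N → ZMod 2,
      P.real {ω | ε / 2 ^ N < |∑ s ∈ D with blockParity p s = v, Z s ω|}
        ≤ 2 * A * Real.exp (-(l * (ε / 2 ^ N))) by
    calc P.real {ω | ε < |∑ s ∈ D, Z s ω|}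
        ≤ ∑ v, P.real {ω | ε / 2 ^ N < |∑ s ∈ D with blockParity p s = v, Z s ω|} := by
          rw [← hclasses]
          exact measureReal_lt_abs_sum_le_sum_fiber Z D (blockParity p) ε
      _ ≤ ∑ _v : Fin N → ZMod 2, 2 * A * Real.exp (-(l * (ε / 2 ^ N))) := by
          gcongr with v
          exact hclass v
      _ = 2 ^ N * (2 * A * Real.exp (-(l * (ε / 2 ^ N)))) := by
          rw [Finset.sum_const, nsmul_eq_mul, Finset.card_univ, hclasses]
  intro v
  have hmgf {u : ℝ} (hu : |u| * (p ^ N * B) ≤ δ) := mgf_sum_le_of_alphaMix_le_exp (l := u)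
    (D := D.filter fun s => blockParity p s = v) hN hZ hB hmean hK hc1 hα hp hr
    (fun s hs t ht => (Finset.mem_filter.mp hs).2.trans (Finset.mem_filter.mp ht).2.symm)
    (le_trans (by gcongr; exact Finset.filter_subset _ _) hDr) hu hδ0 hδ hδr
  exact measureReal_lt_abs_le_of_mgf_le hl0
    (fun u => integrable_exp_mul_of_mem_Icc
      (Finset.measurable_fun_sum _ fun s _ => hZ s).aemeasurable
      ((ae_abs_sum_le_card_mul _ hB).mono fun _ h => abs_le.mp h))
    (hmgf hl) (hmgf (by rwa [abs_neg])) _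

end BoundedField

section Deviation

lemma div_four_pow_mul_rpow_neg_le {N : ℕ} {M a q δ ε B : ℝ} (hM : 0 < M) (hq : 0 < q)
    (hqM : q ≤ 2 ^ N * M ^ a) (hδ : 0 ≤ δ) (hε : 0 ≤ ε) (hB : 0 < B) :
    δ / 4 ^ N * ε * B⁻¹ * M ^ (-a) ≤ δ / (q * B) * (ε / 2 ^ N) := by
  have : 0 < M ^ a := Real.rpow_pos_of_pos hM a
  calc δ / 4 ^ N * ε * B⁻¹ * M ^ (-a) = δ / (2 ^ N * M ^ a * B) * (ε / 2 ^ N) := by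
        rw [Real.rpow_neg hM.le, show (4 : ℝ) = 2 * 2 by norm_num, mul_pow]
        field_simp
    _ ≤ δ / (q * B) * (ε / 2 ^ N) := by gcongr

lemma one_le_log_of_exp_two_le {x : ℝ} (hx : Real.exp 2 ≤ x) : 1 ≤ Real.log x :=
  one_le_two.trans ((Real.le_log_iff_exp_le ((Real.exp_pos 2).trans_le hx)).mpr hx)

theorem large_deviation_mixing_field_general (N : ℕ) (hN : 0 < N) (C' c0 c1 : ℝ)
    (hC' : 0 < C') (hc0 : 0 ≤ c0) (hc1 : 0 < c1) :
    ∃ A1 A2 : ℝ, 0 < A1 ∧ 0 < A2 ∧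
      ∀ (Ω : Type*) (_ : MeasurableSpace Ω) (P : Measure Ω),
      IsProbabilityMeasure P →
      ∀ (Z : (Fin N → ℤ) → Ω → ℝ), (∀ s, Measurable (Z s)) →
      (∀ k : ℕ, alphaMix P Z k ≤ c0 * Real.exp (-c1 * k)) →
      ∀ B : ℝ, 0 < B →
      (∀ s, ∫ ω, Z s ω ∂P = 0) →
      (∀ s, ∀ᵐ ω ∂P, |Z s ω| ≤ B) →
      ∀ n : Fin N → ℕ,
      (∀ i, 0 < n i) →
      (∀ i j, C' * (n j : ℝ) ≤ (n i : ℝ)) →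
      ∀ ε : ℝ, 0 < ε →
      P {ω | ε < |∑ s ∈ obsIdx n, Z s ω|} ≤ ENNReal.ofReal
        (A1 * Real.exp (-A2 * ε * B⁻¹ * (∏ i, (n i : ℝ)) ^ (-(N : ℝ) / (N + 1)))) := by
  set K : ℝ := c0 * (∑' j : ℤ, Real.exp (-(c1 / N) * j.natAbs)) ^ N
  set r : ℝ := (1 / C' + 1) ^ N
  have hr : 0 < r := by positivity
  set δ : ℝ := min 1 (c1 / (2 * r))
  have hδ : 0 < δ := by positivity
  have hδr : δ * r ≤ c1 / 2 := by
    calc δ * r ≤ c1 / (2 * r) * r := by gcongr; exact min_le_right _ _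
      _ = c1 / 2 := by field_simp
  refine ⟨2 ^ N * (2 * (Real.exp (4 * K * r) + c0 * (2 * r / c1))), δ / 4 ^ N, by positivity,
    by positivity, fun Ω _ P _ Z hZ hα B hB0 hmean hB n hn hnC ε hε => ?_⟩
  obtain ⟨p, hp, hpM, hcard⟩ := exists_blockSide hN hC' hn hnC
  have hM : 0 < ∏ i, (n i : ℝ) := Finset.prod_pos fun i _ => by exact_mod_cast hn i
  rw [← ofReal_measureReal]
  refine ENNReal.ofReal_le_ofReal <| (measureReal_lt_abs_sum_le_of_alphaMix_le_exp hN hZ hB hmean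
    (sum_alphaMix_latDist_le hN hc0 hc1 hα) hc1 (hα p) hp hr.le hcard hB0 hδ.le
    (min_le_left _ _) hδr ε).trans ?_
  rw [← mul_assoc, neg_mul, neg_mul, neg_mul, neg_div]
  gcongr ?_ * Real.exp (-?_)
  exact div_four_pow_mul_rpow_neg_le hM (by positivity) hpM hδ.le hε.le hB0

end Deviation

/-- Exponential-decay large deviation inequality for bounded, centered, exponentially
α-mixing random fields on `ℤ^N`. -/
theorem large_deviation_mixing_field (N : ℕ) (hN : 0 < N) (C' c0 c1 : ℝ)
    (hC' : 0 < C') (hc0 : 0 < c0) (hc1 : 0 < c1) :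
    ∃ A1 A2 : ℝ, 0 < A1 ∧ 0 < A2 ∧
      ∀ (Ω : Type) (_ : MeasurableSpace Ω) (P : Measure Ω),
      IsProbabilityMeasure P →
      ∀ (Z : (Fin N → ℤ) → Ω → ℝ), (∀ s, Measurable (Z s)) →
      -- identical marginal distributions
      (∀ s t, Measure.map (Z s) P = Measure.map (Z t) P) →
      -- exponentially decreasing α-mixing coefficients
      (∀ k : ℕ, alphaMix P Z k ≤ c0 * Real.exp (-c1 * k)) →
      ∀ B : ℝ, 0 < B →
      (∀ s, ∫ ω, Z s ω ∂P = 0) →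
      (∀ s, ∀ᵐ ω ∂P, |Z s ω| ≤ B) →
      ∀ n : Fin N → ℕ,
      (∀ i, Real.exp 2 ≤ (n i : ℝ)) →
      (∀ i j, C' * (n j : ℝ) ≤ (n i : ℝ)) →
      ∀ ε : ℝ, 0 < ε →
      P {ω | ε < |∑ s ∈ obsIdx n, Z s ω|} ≤ ENNReal.ofReal
        (A1 * Real.exp (-A2 * ε * B⁻¹ * (∏ i, (n i : ℝ)) ^ (-(N : ℝ) / (N + 1)) *
          (∏ i, Real.log (n i))⁻¹)) := by
  obtain ⟨A1, A2, hA1, hA2, hbound⟩ :=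
    large_deviation_mixing_field_general N hN C' c0 c1 hC' hc0.le hc1
  refine ⟨A1, A2, hA1, hA2, fun Ω _ P hP Z hZ _ hα B hB0 hmean hB n hn hnC ε hε => ?_⟩
  have hn0 (i : Fin N) : 0 < n i := Nat.cast_pos.mp ((Real.exp_pos 2).trans_le (hn i))
  have hlog : 1 ≤ ∏ i, Real.log (n i) :=
    Finset.one_le_prod fun i _ => one_le_log_of_exp_two_le (hn i)
  refine (hbound Ω _ P hP Z hZ hα B hB0 hmean hB n hn0 hnC ε hε).trans ?_
  gcongr ENNReal.ofReal (A1 * Real.exp ?_)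
  refine le_mul_of_le_one_right ?_ (inv_le_one_of_one_le₀ hlog)
  rw [neg_mul, neg_mul, neg_mul]
  exact neg_nonpos.mpr (by positivity)
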